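/- Let (U_1,…,U_t) be an [(n_1,…,n_t),k]_{q^m/q}-system associated with a nondegenerate sum-rank metric code C, with N = n_1+…+n_t, and suppose U_1 ∩ … ∩ U_t contains no 1-dimensional F_{q^m}-subspace. Then for every r ∈ {1,…,k} and every integer w, the number of F_{q^m}-subspaces H of F_{q^m}^k of codimension k−r with N − Σ_{i=1}^t dim_{F_q}(U_i ∩ H) = w equals the number of F_{q^m}-subspaces W of codimension r with (tmk − N) − Σ_{i=1}^t dim_{F_q}(U_i^{⊥'} ∩ W) = w − N + trm. In particular, d_1(C) = d_{k−1}(C^{⊥_G}) + N − t(k−1)m. -/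

import Mathlib

/-! The standard dot product on `Fqm^k` is nondegenerate, and so is its trace `Tr(x · y)` down to
`Fq`, since finite extensions of finite fields are separable. For an `Fqm`-subspace `H` the two
forms have the same orthogonal `H^⊥`: if `Tr(u · y) = 0` for all `u ∈ H`, then replacing `u` by
`a u` gives `Tr(a (u · y)) = 0` for all `a`, hence `u · y = 0`. Therefore
`U^{⊥'} ∩ H^⊥ = (U + H)^{⊥'}`, and Grassmann's formula gives
`dim (U^{⊥'} ∩ H^⊥) + dim U + m dim H = mk + dim (U ∩ H)`.
Summing over the `Uᵢ`, the involution `H ↦ H^⊥` on `Fqm`-subspaces is a bijection between the two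
families being counted. Taken with `dim H = k - 1`, the same identity translates the maximum
defining `d₁(C)` into the one defining `d_{k-1}(C^{⊥_G})`.
-/


open Module Submodule

/-- The rank over `Fq` of a vector with entries in `Fqm`: the `Fq`-dimension of the
`Fq`-span of its entries. -/
noncomputable def rk (Fq : Type) [Field Fq] {Fqm : Type} [Field Fqm] [Algebra Fq Fqm]
    {n : ℕ} (v : Fin n → Fqm) : ℕ :=
  Module.finrank Fq (Submodule.span Fq (Set.range v))

/-- The sum-rank weight of a vector `x ∈ ⊕ᵢ Fqm^{nᵢ}`. -/
noncomputable def srw (Fq : Type) [Field Fq] {Fqm : Type} [Field Fqm] [Algebra Fq Fqm]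
    {t : ℕ} {n : Fin t → ℕ} (x : (i : Fin t) → Fin (n i) → Fqm) : ℕ :=
  ∑ i, rk Fq (x i)

/-- `G` is a generator matrix of the sum-rank metric code `C`. -/
def IsGenMatrix {Fqm : Type} [Field Fqm] {t k : ℕ} {n : Fin t → ℕ}
    (C : Submodule Fqm ((i : Fin t) → Fin (n i) → Fqm))
    (G : Fin k → (i : Fin t) → Fin (n i) → Fqm) : Prop :=
  LinearIndependent Fqm G ∧ Submodule.span Fqm (Set.range G) = C

/-- Nondegeneracy: the columns of each block of a generator matrix are
`Fq`-linearly independent. -/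
def Nondeg (Fq : Type) [Field Fq] {Fqm : Type} [Field Fqm] [Algebra Fq Fqm] {t k : ℕ}
    {n : Fin t → ℕ} (G : Fin k → (i : Fin t) → Fin (n i) → Fqm) : Prop :=
  ∀ i : Fin t, LinearIndependent Fq (fun j : Fin (n i) => fun r : Fin k => G r i j)

/-- A sum-rank metric code is minimal if, whenever the (blockwise) sum-rank support of a
codeword `c'` is contained in the support of a codeword `c`, then `c'` is a scalar
multiple of `c`. -/
def IsMinimal (Fq : Type) [Field Fq] {Fqm : Type} [Field Fqm] [Algebra Fq Fqm] {t : ℕ}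
    {n : Fin t → ℕ} (C : Submodule Fqm ((i : Fin t) → Fin (n i) → Fqm)) : Prop :=
  ∀ c ∈ C, ∀ c' ∈ C,
    (∀ i, Submodule.span Fq (Set.range (c' i)) ≤ Submodule.span Fq (Set.range (c i))) →
    ∃ a : Fqm, c' = a • c

/-- The dual `U^{⊥'}` of an `Fq`-subspace of `Fqm^k`, with respect to the (fixed)
nondegenerate reflexive `Fq`-bilinear form `σ'(x,y) = Tr_{Fqm/Fq}(∑ⱼ xⱼ yⱼ)`. -/
noncomputable def dualPerp (Fq : Type) [Field Fq] {Fqm : Type} [Field Fqm] [Algebra Fq Fqm]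
    {k : ℕ} (U : Submodule Fq (Fin k → Fqm)) : Submodule Fq (Fin k → Fqm) where
  carrier := {y | ∀ u ∈ U, Algebra.trace Fq Fqm (∑ j, u j * y j) = 0}
  zero_mem' := by intro u hu; simp
  add_mem' := by
    intro y z hy hz u hu
    have h : (∑ j, u j * (y + z) j) = (∑ j, u j * y j) + (∑ j, u j * z j) := by
      rw [← Finset.sum_add_distrib]
      exact Finset.sum_congr rfl fun j _ => by simp [mul_add]
    rw [h, map_add, hy u hu, hz u hu, add_zero]
  smul_mem' := by
    intro c y hy u hu
    have h : (∑ j, u j * (c • y) j) = c • (∑ j, u j * y j) := by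
      rw [Finset.smul_sum]
      exact Finset.sum_congr rfl fun j _ => by simp [Algebra.mul_smul_comm]
    rw [h, map_smul, hy u hu, smul_zero]

/-- The `Fq`-subspace of `Fqm^k` underlying the `Fqm`-line spanned by `v`. -/
def lineFq (Fq : Type) [Field Fq] {Fqm : Type} [Field Fqm] [Algebra Fq Fqm]
    {k : ℕ} (v : Fin k → Fqm) : Submodule Fq (Fin k → Fqm) :=
  Submodule.restrictScalars Fq (Submodule.span Fqm {v})

/-- An `Fq`-subspace `U` of `Fqm^k` is scattered if every point of the associated linear
set `L_U` has weight one. -/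
noncomputable def Scattered (Fq : Type) [Field Fq] {Fqm : Type} [Field Fqm] [Algebra Fq Fqm]
    {k : ℕ} (U : Submodule Fq (Fin k → Fqm)) : Prop :=
  ∀ v : Fin k → Fqm, v ≠ 0 → Module.finrank Fq ↥(U ⊓ lineFq Fq v) ≤ 1

/-- Gaussian binomial coefficient with base `Q`. -/
def gaussBinom (Q : ℕ) : ℕ → ℕ → ℕ
  | _, 0 => 1
  | 0, _ + 1 => 0
  | a + 1, b + 1 => gaussBinom Q a b + Q ^ (b + 1) * gaussBinom Q a (b + 1)

section TraceDot

variable (Fq : Type) [Field Fq] {Fqm : Type} [Field Fqm] [Algebra Fq Fqm] {k : ℕ}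

/-- The `Fq`-bilinear form `(x, y) ↦ Tr_{Fqm/Fq}(∑ⱼ xⱼ yⱼ)` on `Fqm^k`. For `Fq = Fqm` the trace
is the identity, and this is the standard dot product. -/
noncomputable def traceDot : LinearMap.BilinForm Fq (Fin k → Fqm) :=
  LinearMap.mk₂ Fq (fun x y => Algebra.trace Fq Fqm (∑ j, x j * y j))
    (by intro x x' y; simp [add_mul, Finset.sum_add_distrib])
    (by intro c x y; simp [← Finset.smul_sum])
    (by intro x y y'; simp [mul_add, Finset.sum_add_distrib])
    (by intro c x y; simp [← Finset.smul_sum])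

lemma traceDot_apply (x y : Fin k → Fqm) :
    traceDot Fq x y = Algebra.trace Fq Fqm (∑ j, x j * y j) := rfl

lemma dualPerp_eq_orthogonal (U : Submodule Fq (Fin k → Fqm)) :
    dualPerp Fq U = (traceDot Fq).orthogonal U := rfl

lemma traceDot_comm (x y : Fin k → Fqm) : traceDot Fq x y = traceDot Fq y x := by
  simp only [traceDot_apply, mul_comm]

lemma traceDot_isRefl : (traceDot Fq (Fqm := Fqm) (k := k)).IsRefl := fun x y h => by
  rw [traceDot_comm]; exact h

variable {Fq} in
lemma eq_zero_of_trace_mul [FiniteDimensional Fq Fqm] [Algebra.IsSeparable Fq Fqm] {c : Fqm}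
    (h : ∀ a, Algebra.trace Fq Fqm (c * a) = 0) : c = 0 :=
  (traceForm_nondegenerate Fq Fqm).1 c h

lemma traceDot_nondegenerate [FiniteDimensional Fq Fqm] [Algebra.IsSeparable Fq Fqm] :
    (traceDot Fq (Fqm := Fqm) (k := k)).Nondegenerate := by
  have key : ∀ x : Fin k → Fqm, (∀ y, traceDot Fq x y = 0) → x = 0 := by
    intro x hx
    funext j
    refine eq_zero_of_trace_mul (Fq := Fq) fun a => ?_
    simpa [traceDot_apply, Pi.single_apply] using hx (Pi.single j a)
  exact ⟨key, fun y hy => key y fun x => by rw [traceDot_comm]; exact hy x⟩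

/-- On an `Fqm`-subspace, the dual for the trace form agrees with the dual for the dot product. -/
lemma dualPerp_restrictScalars [FiniteDimensional Fq Fqm] [Algebra.IsSeparable Fq Fqm]
    (H : Submodule Fqm (Fin k → Fqm)) :
    dualPerp Fq (H.restrictScalars Fq) = (dualPerp Fqm H).restrictScalars Fq := by
  ext y
  change (∀ u ∈ H, Algebra.trace Fq Fqm (∑ j, u j * y j) = 0) ↔
    (∀ u ∈ H, Algebra.trace Fqm Fqm (∑ j, u j * y j) = 0)
  simp only [Algebra.trace_self_apply]
  refine ⟨fun h u hu => eq_zero_of_trace_mul (Fq := Fq) fun a => ?_, fun h u hu => by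
    rw [h u hu, map_zero]⟩
  have := h (a • u) (H.smul_mem a hu)
  simpa [mul_assoc, ← Finset.mul_sum, mul_comm _ a] using this

lemma dualPerp_sup (U V : Submodule Fq (Fin k → Fqm)) :
    dualPerp Fq (U ⊔ V) = dualPerp Fq U ⊓ dualPerp Fq V := by
  simp only [dualPerp_eq_orthogonal]
  apply le_antisymm
  · exact le_inf (LinearMap.BilinForm.orthogonal_le le_sup_left)
      (LinearMap.BilinForm.orthogonal_le le_sup_right)
  · rintro y ⟨hU, hV⟩ x hx
    obtain ⟨u, hu, v, hv, rfl⟩ := Submodule.mem_sup.1 hx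
    have h1 : traceDot Fq u y = 0 := hU u hu
    have h2 : traceDot Fq v y = 0 := hV v hv
    change traceDot Fq (u + v) y = 0
    rw [map_add, LinearMap.add_apply, h1, h2, add_zero]

lemma finrank_dualPerp_add [FiniteDimensional Fq Fqm] [Algebra.IsSeparable Fq Fqm]
    (U : Submodule Fq (Fin k → Fqm)) :
    finrank Fq (dualPerp Fq U) + finrank Fq U = k * finrank Fq Fqm := by
  have h := LinearMap.BilinForm.finrank_orthogonal
    (traceDot_nondegenerate Fq (Fqm := Fqm) (k := k)) U
  have hle := Submodule.finrank_le U
  have hV : finrank Fq (Fin k → Fqm) = k * finrank Fq Fqm := by simp [Module.finrank_pi_fintype]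
  rw [dualPerp_eq_orthogonal]
  omega

lemma dualPerp_dualPerp [FiniteDimensional Fq Fqm] [Algebra.IsSeparable Fq Fqm]
    (U : Submodule Fq (Fin k → Fqm)) : dualPerp Fq (dualPerp Fq U) = U := by
  simp only [dualPerp_eq_orthogonal]
  exact LinearMap.BilinForm.orthogonal_orthogonal (traceDot_nondegenerate Fq)
    (traceDot_isRefl Fq) U

/-- Grassmann's formula applied to `U^{⊥'} ∩ H^⊥ = (U + H)^{⊥'}`. -/
lemma finrank_dualPerp_inf [FiniteDimensional Fq Fqm] [Algebra.IsSeparable Fq Fqm]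
    (U : Submodule Fq (Fin k → Fqm)) (H : Submodule Fqm (Fin k → Fqm)) :
    finrank Fq ↥(dualPerp Fq U ⊓ (dualPerp Fqm H).restrictScalars Fq) + finrank Fq U
        + finrank Fqm H * finrank Fq Fqm
      = k * finrank Fq Fqm + finrank Fq ↥(U ⊓ H.restrictScalars Fq) := by
  rw [← dualPerp_restrictScalars, ← dualPerp_sup]
  have h1 := finrank_dualPerp_add Fq (U ⊔ H.restrictScalars Fq)
  have h2 := Submodule.finrank_sup_add_finrank_inf_eq U (H.restrictScalars Fq)
  have h3 : finrank Fq ↥(H.restrictScalars Fq) = finrank Fqm H * finrank Fq Fqm := by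
    rw [mul_comm]; exact (Module.finrank_mul_finrank Fq Fqm H).symm
  omega

/-- The involution `H ↦ H^⊥` on the `Fqm`-subspaces of `Fqm^k`. -/
noncomputable def dualEquiv (Fqm : Type) [Field Fqm] (k : ℕ) :
    Submodule Fqm (Fin k → Fqm) ≃ Submodule Fqm (Fin k → Fqm) where
  toFun H := dualPerp Fqm H
  invFun H := dualPerp Fqm H
  left_inv H := dualPerp_dualPerp Fqm H
  right_inv H := dualPerp_dualPerp Fqm H

lemma finrank_dualPerp_self (H : Submodule Fqm (Fin k → Fqm)) :
    finrank Fqm (dualPerp Fqm H) + finrank Fqm H = k := by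
  simpa using finrank_dualPerp_add Fqm H

end TraceDot

/-- MacWilliams-type relation between the generalized weight enumerators
of a sum-rank metric code and its geometric dual: for every `1 ≤ r ≤ k` and `w ∈ ℤ`, the
number of `Fqm`-subspaces `H` of codimension `k-r` (i.e. dimension `r`) with
`N - ∑ᵢ dim_{Fq}(Uᵢ ∩ H) = w` equals the number of subspaces `W` of codimension `r`
(dimension `k-r`) with `(tmk - N) - ∑ᵢ dim_{Fq}(Uᵢ^{⊥'} ∩ W) = w - N + trm`.
In particular `d₁(C) = d_{k-1}(C^{⊥_G}) + N - t(k-1)m`. -/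
theorem geometric_dual_weight_enumerators
    {Fq Fqm : Type} [Field Fq] [Fintype Fq] [Field Fqm] [Fintype Fqm] [Algebra Fq Fqm]
    {m k t : ℕ} (hm : Module.finrank Fq Fqm = m) (hk : 1 ≤ k) (ht : 1 ≤ t)
    {n : Fin t → ℕ} (U : Fin t → Submodule Fq (Fin k → Fqm))
    (hdim : ∀ i, Module.finrank Fq ↥(U i) = n i)
    (hspan : Submodule.span Fqm (⋃ i, (U i : Set (Fin k → Fqm))) = ⊤)
    (hint : ∀ v : Fin k → Fqm, (∀ (a : Fqm) (i : Fin t), a • v ∈ U i) → v = 0)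
    {N : ℕ} (hN : N = ∑ i, n i)
    {r : ℕ} (hr1 : 1 ≤ r) (hrk : r ≤ k) (w : ℤ) :
    Nat.card {H : Submodule Fqm (Fin k → Fqm) //
        Module.finrank Fqm ↥H = r ∧
        (N : ℤ) - ∑ i, (Module.finrank Fq ↥(U i ⊓ Submodule.restrictScalars Fq H) : ℤ) = w}
      = Nat.card {W : Submodule Fqm (Fin k → Fqm) //
        Module.finrank Fqm ↥W = k - r ∧
        ((t * m * k : ℤ) - (N : ℤ)) -
            ∑ i, (Module.finrank Fq
              ↥(dualPerp Fq (U i) ⊓ Submodule.restrictScalars Fq W) : ℤ)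
          = w - (N : ℤ) + (t : ℤ) * r * m}
    ∧ (N : ℤ) - (Nat.cast (sSup {s : ℕ | ∃ H : Submodule Fqm (Fin k → Fqm),
          Module.finrank Fqm ↥H = k - 1 ∧
          s = ∑ i, Module.finrank Fq ↥(U i ⊓ Submodule.restrictScalars Fq H)}) : ℤ)
      = (((t * m * k : ℤ) - (N : ℤ)) -
          (Nat.cast (sSup {s : ℕ | ∃ W : Submodule Fqm (Fin k → Fqm),
            Module.finrank Fqm ↥W = 1 ∧
            s = ∑ i, Module.finrank Fq
              ↥(dualPerp Fq (U i) ⊓ Submodule.restrictScalars Fq W)}) : ℤ))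
        + (N : ℤ) - (t : ℤ) * (k - 1 : ℕ) * m := by
  have : Module.Finite Fq Fqm := Module.Finite.of_finite
  have key : ∀ H : Submodule Fqm (Fin k → Fqm),
      ∑ i, finrank Fq ↥(dualPerp Fq (U i) ⊓ (dualPerp Fqm H).restrictScalars Fq) + N
          + t * (finrank Fqm H * m)
        = t * (k * m) + ∑ i, finrank Fq ↥(U i ⊓ H.restrictScalars Fq) := by
    intro H
    have h := Finset.sum_congr rfl fun (i : Fin t) (_ : i ∈ Finset.univ) =>
      finrank_dualPerp_inf Fq (U i) H
    simpa [Finset.sum_add_distrib, hdim, hm, ← hN] using h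
  constructor
  · refine Nat.card_congr ((dualEquiv Fqm k).subtypeEquiv fun H => ?_)
    have h1 := finrank_dualPerp_self H
    have h2 : (_ : ℤ) = _ := congrArg Nat.cast (key H)
    push_cast at h2
    change _ ↔ finrank Fqm ↥(dualPerp Fqm H) = k - r ∧ (t * m * k : ℤ) - N -
      ∑ i, (finrank Fq ↥(dualPerp Fq (U i) ⊓ (dualPerp Fqm H).restrictScalars Fq) : ℤ) = _
    have h3 : finrank Fqm ↥(dualPerp Fqm H) = k - r ↔ finrank Fqm H = r := by omega
    rw [h3]
    refine and_congr_right fun hr => ?_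
    rw [hr] at h2
    constructor <;> intro h <;> linarith
  -- Both maxima are attained, since the first family of subspaces is nonempty and bounded.
  · set S : Set ℕ := {s : ℕ | ∃ H : Submodule Fqm (Fin k → Fqm),
      finrank Fqm ↥H = k - 1 ∧ s = ∑ i, finrank Fq ↥(U i ⊓ H.restrictScalars Fq)} with hS
    set T : Set ℕ := {s : ℕ | ∃ W : Submodule Fqm (Fin k → Fqm), finrank Fqm ↥W = 1 ∧
      s = ∑ i, finrank Fq ↥(dualPerp Fq (U i) ⊓ W.restrictScalars Fq)} with hT
    have hne : S.Nonempty := by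
      have hv : (Pi.single ⟨0, hk⟩ 1 : Fin k → Fqm) ≠ 0 := by simp
      have h1 := finrank_span_singleton (K := Fqm) hv
      have h2 := finrank_dualPerp_self (Fqm ∙ (Pi.single ⟨0, hk⟩ 1 : Fin k → Fqm))
      exact ⟨_, dualPerp Fqm (Fqm ∙ (Pi.single ⟨0, hk⟩ 1 : Fin k → Fqm)), by omega, rfl⟩
    have hbdd : BddAbove S := by
      refine ⟨N, ?_⟩
      rintro s ⟨H, -, rfl⟩
      rw [hN]
      exact Finset.sum_le_sum fun i _ => (hdim i) ▸ Submodule.finrank_mono inf_le_left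
    obtain ⟨H, hH, hmax⟩ := Nat.sSup_mem hne hbdd
    have hTmax : IsGreatest T
        (∑ i, finrank Fq ↥(dualPerp Fq (U i) ⊓ (dualPerp Fqm H).restrictScalars Fq)) := by
      refine ⟨⟨dualPerp Fqm H, ?_, rfl⟩, ?_⟩
      · have := finrank_dualPerp_self H
        omega
      · rintro _ ⟨W, hW, rfl⟩
        have h1 := finrank_dualPerp_self W
        have hd : finrank Fqm ↥(dualPerp Fqm W) = k - 1 := by omega
        have h2 := key (dualPerp Fqm W)
        rw [dualPerp_dualPerp, hd] at h2
        have h3 := key H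
        rw [hH, ← hmax] at h3
        have h4 := le_csSup hbdd ⟨dualPerp Fqm W, hd, rfl⟩
        omega
    rw [hTmax.csSup_eq]
    have h : (_ : ℤ) = _ := congrArg Nat.cast (key H)
    rw [hH, ← hmax] at h
    push_cast at h ⊢
    linarith
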